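/- arXiv:2103.03298 — 2 statements merged into one kernel-verified Lean document; each statement's English description precedes it below -/
import Mathlib

section
/- Let a ∈ {7, 11, 19, 43, 67, 163} and let n be a positive integer. Suppose x, y, z are integers with gcd(x,y) = 1 satisfying x^2 + a·y^{2n} = 4z^3. Then there exist odd integers u, v with gcd(u,v) = 1 and u·v ≠ 0 such that 4x = u(u^2 − 3a·v^2), 4y^n = v(3u^2 − a·v^2), and 4z = u^2 + a·v^2. -/
/-!
Write `a = 4m - 1`. In the order `ℤ[(1 + √(-a))/2]` of discriminant `-a`, a solution of
`x² + a w² = 4z³` is an element `α = (x + w√(-a))/2` of norm `z³`. Coprimality of `x` and `w`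
makes `α` coprime to its conjugate, so if the order is a principal ideal domain then `α` is a cube
up to a unit; the units are `±1`, which are cubes. Comparing `α` with `((u + v√(-a))/2)³` gives the
formulas.

Principality comes from a Dedekind–Hasse argument. Let `β` have minimal norm in an ideal `I` and let
`α ∈ I`. Dirichlet approximation of `α / β` yields a small integer `k > 0` with `β ∣ kα`, and when
all small primes are inert the factor `k` can be cancelled one prime at a time.
-/

theorem exists_abs_natCast_mul_sub_mul_le (b : ℤ) {n : ℤ} (hn : 0 < n) {N : ℕ} (hN : 0 < N) :
    ∃ k : ℕ, 0 < k ∧ k ≤ N ∧ ∃ j : ℤ, |k * b - j * n| * (N + 1) ≤ n := by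
  obtain ⟨k, hk, hkN, h⟩ := Real.exists_nat_abs_mul_sub_round_le ((b : ℝ) / n) hN
  refine ⟨k, hk, hkN, round (k * ((b : ℝ) / n)), ?_⟩
  have hn' : (0 : ℝ) < n := by exact_mod_cast hn
  generalize round (k * ((b : ℝ) / n)) = j at h ⊢
  have hdiv : (k : ℝ) * (b / n) - j = (k * b - j * n) / n := by field_simp
  rw [hdiv, abs_div, abs_of_pos hn', div_le_div_iff₀ hn' (by positivity), one_mul] at h
  exact_mod_cast h

theorem isCoprime_of_sq_add_mul_sq_eq_mul_sq {R : Type*} [CommRing R] [IsDomain R]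
    [IsPrincipalIdealRing R] {a x w c z : R} (ha : Squarefree a) (hxw : IsCoprime x w)
    (h : x ^ 2 + a * w ^ 2 = c * z ^ 2) : IsCoprime x z := by
  refine isRelPrime_iff_isCoprime.mp fun d hdx hdz ↦ ha d ?_
  have hd : d ^ 2 ∣ a * w ^ 2 := by
    rw [eq_sub_of_add_eq' h]
    exact dvd_sub ((pow_dvd_pow_of_dvd hdz 2).mul_left c) (pow_dvd_pow_of_dvd hdx 2)
  rw [← sq]
  exact (hxw.of_isCoprime_of_dvd_left hdx).pow.dvd_of_dvd_mul_right hd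

open QuadraticAlgebra in
theorem isCoprime_star_of_isCoprime_trace_norm {R : Type*} [CommRing R] {a b : R}
    {t : QuadraticAlgebra R a b} (h : IsCoprime (trace t) t.norm) : IsCoprime t (star t) := by
  have hmap := h.map (algebraMap R (QuadraticAlgebra R a b))
  rw [algebraMap_trace_eq_add_star, algebraMap_norm_eq_mul_star] at hmap
  refine IsCoprime.of_mul_add_left_right (z := 1) ?_
  simpa only [mul_one] using hmap.of_mul_right_left.symm

/-- The order `ℤ[ω]` with `ω² = ω - m`, that is `ω = (1 + √(1 - 4m)) / 2`, of discriminant `1 - 4m`.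
The trace of `⟨p, q⟩ = p + qω` is `2p + q`, so that `p + qω = (trace + q√(1 - 4m)) / 2`. -/
abbrev QuadraticOrder (m : ℤ) : Type := QuadraticAlgebra ℤ (-m) 1

namespace QuadraticOrder

open QuadraticAlgebra

variable {m : ℤ}

theorem trace_eq (t : QuadraticOrder m) : trace t = 2 * t.re + t.im := by
  rw [trace_def, one_mul]

theorem four_mul_norm (t : QuadraticOrder m) :
    4 * t.norm = trace t ^ 2 + (4 * m - 1) * t.im ^ 2 := by
  rw [norm_def, trace_eq]; ring

theorem four_mul_trace_pow_three (t : QuadraticOrder m) :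
    4 * trace (t ^ 3) = trace t * (trace t ^ 2 - 3 * (4 * m - 1) * t.im ^ 2) := by
  simp only [trace_eq, pow_succ, pow_zero, one_mul, re_mul, im_mul]; ring

theorem four_mul_im_pow_three (t : QuadraticOrder m) :
    4 * (t ^ 3).im = t.im * (3 * trace t ^ 2 - (4 * m - 1) * t.im ^ 2) := by
  simp only [trace_eq, pow_succ, pow_zero, one_mul, re_mul, im_mul]; ring

theorem intCast_norm (t : QuadraticOrder m) : (t.norm : QuadraticOrder m) = t * star t := by
  rw [← algebraMap_norm_eq_mul_star, eq_intCast]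

theorem natCast_dvd_iff {k : ℕ} {t : QuadraticOrder m} :
    (k : QuadraticOrder m) ∣ t ↔ (k : ℤ) ∣ t.re ∧ (k : ℤ) ∣ t.im := by
  rw [← algebraMap_dvd_iff, map_natCast]

theorem exists_trace_im_norm_eq {x w s : ℤ} (h : x ^ 2 + (4 * m - 1) * w ^ 2 = 4 * s) :
    ∃ t : QuadraticOrder m, trace t = x ∧ t.im = w ∧ t.norm = s := by
  have hsub : Even (x - w) := by
    have hsq : Even (x ^ 2 - w ^ 2) := ⟨2 * s - 2 * m * w ^ 2, by linear_combination h⟩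
    simpa [parity_simps] using hsq
  obtain ⟨p, hp⟩ := hsub
  have htrace : trace (⟨p, w⟩ : QuadraticOrder m) = x := by rw [trace_eq]; linarith
  refine ⟨⟨p, w⟩, htrace, rfl, ?_⟩
  have hnorm := four_mul_norm (⟨p, w⟩ : QuadraticOrder m)
  rw [htrace] at hnorm
  linarith

theorem norm_nonneg (hm : 0 < m) (t : QuadraticOrder m) : 0 ≤ t.norm := by
  nlinarith [four_mul_norm t, sq_nonneg (trace t), sq_nonneg t.im]

theorem norm_eq_zero_iff (hm : 0 < m) {t : QuadraticOrder m} : t.norm = 0 ↔ t = 0 := by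
  refine ⟨fun h ↦ ?_, fun h ↦ by rw [h, QuadraticAlgebra.norm_zero]⟩
  have hnorm := four_mul_norm t
  have him : t.im = 0 := pow_eq_zero_iff two_ne_zero |>.mp <| by
    nlinarith [sq_nonneg (trace t), sq_nonneg t.im]
  have htrace : trace t = 0 := by simpa [h, him] using hnorm.symm
  rw [trace_eq] at htrace
  ext
  · rw [re_zero]; omega
  · rw [im_zero, him]

theorem norm_pos (hm : 0 < m) {t : QuadraticOrder m} (ht : t ≠ 0) : 0 < t.norm :=
  (norm_nonneg hm t).lt_of_ne' (mt (norm_eq_zero_iff hm).mp ht)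

theorem isDomain (hm : 0 < m) : IsDomain (QuadraticOrder m) := by
  have : NoZeroDivisors (QuadraticOrder m) := ⟨fun {s t} hst ↦ by
    rw [← norm_eq_zero_iff hm, ← norm_eq_zero_iff hm, ← mul_eq_zero, ← map_mul, hst,
      QuadraticAlgebra.norm_zero]⟩
  exact NoZeroDivisors.to_isDomain _

theorem eq_one_or_neg_one_of_isUnit (hm : 2 ≤ m) {t : QuadraticOrder m} (ht : IsUnit t) :
    t = 1 ∨ t = -1 := by
  have hnorm : t.norm = 1 := by
    have hunit := Int.isUnit_iff.mp (isUnit_iff_norm_isUnit.mp ht)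
    have hnonneg := norm_nonneg (by omega) t
    omega
  have h4 := four_mul_norm t
  have him : t.im = 0 := by
    have : t.im ^ 2 < 1 := by nlinarith [sq_nonneg (trace t), sq_nonneg t.im]
    exact sq_eq_zero_iff.mp (by have := sq_nonneg t.im; omega)
  have hre : t.re ^ 2 = 1 := by rw [trace_eq, hnorm, him] at h4; linarith
  refine (sq_eq_one_iff.mp hre).imp (fun h ↦ ?_) (fun h ↦ ?_) <;> ext <;> simp [h, him]

section PrincipalIdeals

/-- The prime `p` is inert in `QuadraticOrder m`, expressed by the absence of roots modulo `p` of
the minimal polynomial `X² - X + m` of `ω`. -/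
def IsInert (m : ℤ) (p : ℕ) : Prop :=
  p.Prime ∧ ∀ r < p, ¬ (p : ℤ) ∣ r ^ 2 - r + m

theorem IsInert.dvd_of_dvd_norm {p : ℕ} (hp : IsInert m p) {t : QuadraticOrder m}
    (h : (p : ℤ) ∣ t.norm) : (p : QuadraticOrder m) ∣ t := by
  have : Fact p.Prime := ⟨hp.1⟩
  have hroot (r : ZMod p) : r ^ 2 - r + m ≠ 0 := fun hr ↦ hp.2 r.val r.val_lt <| by
    rw [← ZMod.intCast_zmod_eq_zero_iff_dvd]
    simpa using hr
  rw [norm_def, ← ZMod.intCast_zmod_eq_zero_iff_dvd] at h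
  push_cast at h
  have him : (t.im : ZMod p) = 0 := by
    by_contra him
    refine hroot (-t.re / t.im) ?_
    field_simp
    linear_combination h
  have hre : (t.re : ZMod p) = 0 := by simpa [him] using h
  rw [natCast_dvd_iff, ← ZMod.intCast_zmod_eq_zero_iff_dvd, ← ZMod.intCast_zmod_eq_zero_iff_dvd]
  exact ⟨hre, him⟩

theorem exists_norm_natCast_mul_sub_intCast_mul_lt {N : ℕ} (hN : 0 < N)
    (hmN : 4 * m - 1 < 3 * ((N : ℤ) + 1) ^ 2) (γ : QuadraticOrder m) {n : ℤ} (hn : 0 < n) :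
    ∃ k : ℕ, 0 < k ∧ k ≤ N ∧ ∃ t : QuadraticOrder m, (k * γ - n * t).norm < n ^ 2 := by
  obtain ⟨k, hk, hkN, j, hj⟩ := exists_abs_natCast_mul_sub_mul_le γ.im hn hN
  -- With bound `1`, Dirichlet approximation is rounding to a nearest integer.
  obtain ⟨l, hl, hl1, i, hi⟩ := exists_abs_natCast_mul_sub_mul_le (k * trace γ - j * n)
    (n := 2 * n) (by omega) one_pos
  obtain rfl : l = 1 := by omega
  refine ⟨k, hk, hkN, ⟨i, j⟩, ?_⟩
  set δ : QuadraticOrder m := k * γ - n * ⟨i, j⟩ with hδ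
  have him : δ.im = k * γ.im - j * n := by
    simp only [hδ, im_sub, im_mul, re_natCast, im_natCast, re_intCast, im_intCast,
      Int.cast_id]
    ring
  have htrace : trace δ = k * trace γ - j * n - i * (2 * n) := by
    simp only [hδ, trace_eq, re_sub, re_mul, im_sub, im_mul, re_natCast, im_natCast, re_intCast,
      im_intCast, Int.cast_id]
    ring
  have htrace_le : |trace δ| ≤ n := by
    rw [htrace]; push_cast [one_mul] at hi; linarith
  have htrace_sq : trace δ ^ 2 ≤ n ^ 2 := sq_le_sq.mpr (by rwa [abs_of_pos hn])
  have him_sq : δ.im ^ 2 * ((N : ℤ) + 1) ^ 2 ≤ n ^ 2 := by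
    rw [him, ← sq_abs, ← mul_pow]; exact pow_le_pow_left₀ (by positivity) hj 2
  have hlt : (4 * m - 1) * δ.im ^ 2 < 3 * n ^ 2 := by
    rcases eq_or_ne δ.im 0 with h | h
    · rw [h]; nlinarith
    · have : 0 < δ.im ^ 2 := by positivity
      nlinarith
  linarith [four_mul_norm δ]

theorem exists_norm_natCast_mul_sub_mul_lt {N : ℕ} (hN : 0 < N)
    (hmN : 4 * m - 1 < 3 * ((N : ℤ) + 1) ^ 2) (α : QuadraticOrder m) {β : QuadraticOrder m}
    (hβ : 0 < β.norm) :
    ∃ k : ℕ, 0 < k ∧ k ≤ N ∧ ∃ t : QuadraticOrder m, (k * α - β * t).norm < β.norm := by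
  obtain ⟨k, hk, hkN, t, ht⟩ :=
    exists_norm_natCast_mul_sub_intCast_mul_lt hN hmN (α * star β) hβ
  refine ⟨k, hk, hkN, t, lt_of_mul_lt_mul_right ?_ hβ.le⟩
  calc (k * α - β * t).norm * β.norm = ((k * α - β * t) * star β).norm := by
        rw [map_mul _ _ (star β), QuadraticAlgebra.norm_star]
    _ = (k * (α * star β) - β.norm * t).norm := by rw [intCast_norm]; congr 1; ring
    _ < β.norm * β.norm := by rwa [← sq]

theorem exists_mem_ne_zero_forall_norm_lt (hm : 0 < m) {I : Ideal (QuadraticOrder m)}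
    (hI : I ≠ ⊥) :
    ∃ β ∈ I, β ≠ 0 ∧ ∀ t ∈ I, t.norm < β.norm → t = 0 := by
  obtain ⟨γ, hγ⟩ := Submodule.exists_mem_ne_zero_of_ne_bot hI
  obtain ⟨β, ⟨hβ, hβ0⟩, hmin⟩ := exists_minimalFor_of_wellFoundedLT
    (fun t : QuadraticOrder m ↦ t ∈ I ∧ t ≠ 0) (fun t ↦ t.norm.toNat) ⟨γ, hγ⟩
  refine ⟨β, hβ, hβ0, fun t ht hlt ↦ by_contra fun ht0 ↦ ?_⟩
  have hle : β.norm.toNat ≤ t.norm.toNat := hmin ⟨ht, ht0⟩ (Int.toNat_le_toNat hlt.le)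
  have hnonneg := norm_nonneg hm t
  omega

variable {I : Ideal (QuadraticOrder m)} {β : QuadraticOrder m}

theorem IsInert.dvd_of_dvd_mul {p : ℕ} (hp : IsInert m p) (hm : 0 < m) (hβ : β ∈ I) (hβ0 : β ≠ 0)
    (hmin : ∀ t ∈ I, t.norm < β.norm → t = 0) {α : QuadraticOrder m} (hα : α ∈ I)
    (h : β ∣ p * α) : β ∣ α := by
  have : IsDomain (QuadraticOrder m) := isDomain hm
  have hp0 : (p : QuadraticOrder m) ≠ 0 := by exact_mod_cast hp.1.ne_zero
  obtain ⟨t, ht⟩ := h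
  by_cases hpt : (p : ℤ) ∣ t.norm
  · obtain ⟨s, rfl⟩ := hp.dvd_of_dvd_norm hpt
    exact ⟨s, mul_left_cancel₀ hp0 (by rw [ht]; ring)⟩
  -- Otherwise `p` is invertible modulo `t.norm`, so `β` is `p` times an element of `I`,
  -- necessarily of smaller norm.
  obtain ⟨r, s, hrs⟩ : IsCoprime (p : ℤ) t.norm :=
    (Nat.prime_iff_prime_int.mp hp.1).coprime_iff_not_dvd.mpr hpt
  set δ : QuadraticOrder m := r * β + s * star t * α
  have hδ : δ ∈ I := I.add_mem (I.mul_mem_left _ hβ) (I.mul_mem_left _ hα)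
  have hβδ : β = p * δ := by
    have hone : (r * p + s * (t * star t) : QuadraticOrder m) = 1 := by
      rw [← intCast_norm]; exact_mod_cast hrs
    linear_combination (-β) * hone - s * star t * ht
  have hδ0 : δ ≠ 0 := by rintro h; exact hβ0 (by rw [hβδ, h, mul_zero])
  have hlt : δ.norm < β.norm := by
    have hp2 : 1 < (p : ℤ) ^ 2 := one_lt_pow₀ (by exact_mod_cast hp.1.one_lt) two_ne_zero
    rw [hβδ, map_mul, QuadraticAlgebra.norm_natCast]
    exact lt_mul_of_one_lt_left (norm_pos hm hδ0) hp2
  exact absurd (hmin δ hδ hlt) hδ0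

theorem dvd_of_dvd_natCast_mul (hm : 0 < m) (hβ : β ∈ I) (hβ0 : β ≠ 0)
    (hmin : ∀ t ∈ I, t.norm < β.norm → t = 0) {k : ℕ} (hk : k ≠ 0)
    (hin : ∀ p, p.Prime → p ∣ k → IsInert m p) {α : QuadraticOrder m} (hα : α ∈ I)
    (h : β ∣ k * α) : β ∣ α := by
  induction k using induction_on_primes with
  | zero => exact absurd rfl hk
  | one => simpa only [Nat.cast_one, one_mul] using h
  | prime_mul p l hp ih =>
    refine ih (right_ne_zero_of_mul hk) (fun q hq hql ↦ hin q hq (hql.mul_left p)) ?_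
    rw [Nat.cast_mul, mul_assoc] at h
    exact (hin p hp (dvd_mul_right p l)).dvd_of_dvd_mul hm hβ hβ0 hmin (I.mul_mem_left _ hα) h

theorem isPrincipalIdealRing_of_forall_isInert (hm : 0 < m) {N : ℕ}
    (hmN : 4 * m - 1 < 3 * ((N : ℤ) + 1) ^ 2) (hin : ∀ p ≤ N, p.Prime → IsInert m p) :
    IsPrincipalIdealRing (QuadraticOrder m) := by
  refine ⟨fun I ↦ ?_⟩
  rcases eq_or_ne I ⊥ with rfl | hI
  · exact bot_isPrincipal
  have hN : 0 < N := by
    rw [Nat.pos_iff_ne_zero]; rintro rfl; norm_num at hmN; omega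
  obtain ⟨β, hβ, hβ0, hmin⟩ := exists_mem_ne_zero_forall_norm_lt hm hI
  refine ⟨β, le_antisymm (fun α hα ↦ ?_) ((Submodule.span_singleton_le_iff_mem β I).mpr hβ)⟩
  obtain ⟨k, hk, hkN, t, ht⟩ := exists_norm_natCast_mul_sub_mul_lt hN hmN α (norm_pos hm hβ0)
  have hkα : k * α = β * t := sub_eq_zero.mp <|
    hmin _ (I.sub_mem (I.mul_mem_left _ hα) (I.mul_mem_right _ hβ)) ht
  exact Ideal.mem_span_singleton.mpr <| dvd_of_dvd_natCast_mul hm hβ hβ0 hmin hk.ne'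
    (fun p hp hpk ↦ hin p ((Nat.le_of_dvd hk hpk).trans hkN) hp) hα ⟨t, hkα⟩

theorem isPrincipalIdealRing_of_mem (hm : m ∈ ({2, 3, 5, 11, 17, 41} : Set ℤ)) :
    IsPrincipalIdealRing (QuadraticOrder m) := by
  have criterion (N : ℕ) (hm0 : 0 < m) (hmN : 4 * m - 1 < 3 * ((N : ℤ) + 1) ^ 2)
      (hin : ∀ p ≤ N, p.Prime → ∀ r < p, ¬ (p : ℤ) ∣ r ^ 2 - r + m) :=
    isPrincipalIdealRing_of_forall_isInert hm0 hmN fun p hpN hp ↦ ⟨hp, hin p hpN hp⟩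
  rcases hm with rfl | rfl | rfl | rfl | rfl | rfl
  · exact criterion 1 (by decide) (by decide) (by decide)
  · exact criterion 1 (by decide) (by decide) (by decide)
  · exact criterion 2 (by decide) (by decide) (by decide)
  · exact criterion 3 (by decide) (by decide) (by decide)
  · exact criterion 4 (by decide) (by decide) (by decide)
  · exact criterion 7 (by decide) (by decide) (by decide)

end PrincipalIdeals

theorem exists_pow_eq_of_norm_eq_pow [IsPrincipalIdealRing (QuadraticOrder m)] (hm : 2 ≤ m)
    {k : ℕ} (hk : Odd k) {t : QuadraticOrder m} (ht : IsCoprime (trace t) t.norm) {z : ℤ}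
    (hz : t.norm = z ^ k) : ∃ s : QuadraticOrder m, s ^ k = t := by
  have : IsDomain (QuadraticOrder m) := isDomain (by omega)
  have hmul : t * star t = (z : QuadraticOrder m) ^ k := by rw [← intCast_norm, hz, Int.cast_pow]
  obtain ⟨d, ε, hε⟩ :=
    exists_associated_pow_of_mul_eq_pow' (isCoprime_star_of_isCoprime_trace_norm ht) hmul
  rcases eq_one_or_neg_one_of_isUnit hm ε.isUnit with h | h
  · exact ⟨d, by rw [← hε, h, mul_one]⟩
  · exact ⟨-d, by rw [← hε, h, hk.neg_pow, mul_neg_one]⟩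

theorem odd_trace_iff {t : QuadraticOrder m} : Odd (trace t) ↔ Odd t.im := by
  rw [trace_eq, Int.odd_add', iff_true_right (even_two_mul _)]

theorem odd_im_of_isCoprime_pow_three {t : QuadraticOrder m}
    (h : IsCoprime (trace (t ^ 3)) (t ^ 3).im) : Odd t.im := by
  by_contra him
  obtain ⟨u, hu⟩ := Int.not_odd_iff_even.mp (mt odd_trace_iff.mp him)
  obtain ⟨v, hv⟩ := Int.not_odd_iff_even.mp him
  have htrace := four_mul_trace_pow_three t
  have him3 := four_mul_im_pow_three t
  rw [hu, hv] at htrace him3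
  have htwo : IsUnit (2 : ℤ) := h.isUnit_of_dvd'
    ⟨u * (u ^ 2 - 3 * (4 * m - 1) * v ^ 2), by linarith⟩
    ⟨v * (3 * u ^ 2 - (4 * m - 1) * v ^ 2), by linarith⟩
  exact absurd htwo (by decide)

theorem isCoprime_of_isCoprime_pow_three {t : QuadraticOrder m}
    (h : IsCoprime (trace (t ^ 3)) (t ^ 3).im) : IsCoprime (trace t) t.im := by
  refine isRelPrime_iff_isCoprime.mp fun d hdt hdi ↦ ?_
  have hd4 : IsCoprime d (2 ^ 2) :=
    (Int.isCoprime_two_right.mpr (odd_im_of_isCoprime_pow_three h)).of_isCoprime_of_dvd_left hdi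
      |>.pow_right
  refine h.isUnit_of_dvd' (hd4.dvd_of_dvd_mul_left ?_) (hd4.dvd_of_dvd_mul_left ?_)
  · exact four_mul_trace_pow_three t ▸ hdt.mul_right _
  · exact four_mul_im_pow_three t ▸ hdi.mul_right _

end QuadraticOrder

open QuadraticAlgebra QuadraticOrder in
theorem exists_odd_isCoprime_of_sq_add_mul_sq_eq_four_mul_cube {m : ℤ} (hm : 2 ≤ m)
    (hsq : Squarefree (4 * m - 1)) [IsPrincipalIdealRing (QuadraticOrder m)] {x w z : ℤ}
    (hxw : IsCoprime x w) (h : x ^ 2 + (4 * m - 1) * w ^ 2 = 4 * z ^ 3) :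
    ∃ u v : ℤ, Odd u ∧ Odd v ∧ IsCoprime u v ∧
      4 * x = u * (u ^ 2 - 3 * (4 * m - 1) * v ^ 2) ∧
      4 * w = v * (3 * u ^ 2 - (4 * m - 1) * v ^ 2) ∧
      4 * z = u ^ 2 + (4 * m - 1) * v ^ 2 := by
  have hxz : IsCoprime x z :=
    isCoprime_of_sq_add_mul_sq_eq_mul_sq hsq hxw (c := 4 * z) (by rw [h]; ring)
  obtain ⟨α, rfl, rfl, hα⟩ := exists_trace_im_norm_eq h
  obtain ⟨b, rfl⟩ :=
    exists_pow_eq_of_norm_eq_pow hm (by decide) (by rw [hα]; exact hxz.pow_right) hα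
  have hz : b.norm = z := (Odd.pow_inj (by decide)).mp ((map_pow _ b 3).symm.trans hα)
  have hodd := odd_im_of_isCoprime_pow_three hxw
  exact ⟨trace b, b.im, odd_trace_iff.mpr hodd, hodd, isCoprime_of_isCoprime_pow_three hxw,
    four_mul_trace_pow_three b, four_mul_im_pow_three b, hz ▸ four_mul_norm b⟩

theorem factorization_x2_ay2n_4z3
    (a : ℤ) (ha : a ∈ ({7, 11, 19, 43, 67, 163} : Set ℤ))
    (n : ℕ) (hn : 0 < n)
    (x y z : ℤ) (hgcd : Int.gcd x y = 1)
    (heq : x ^ 2 + a * y ^ (2 * n) = 4 * z ^ 3) :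
    ∃ u v : ℤ, Odd u ∧ Odd v ∧ Int.gcd u v = 1 ∧ u * v ≠ 0 ∧
      4 * x = u * (u ^ 2 - 3 * a * v ^ 2) ∧
      4 * y ^ n = v * (3 * u ^ 2 - a * v ^ 2) ∧
      4 * z = u ^ 2 + a * v ^ 2 := by
  obtain ⟨m, hm, rfl⟩ : ∃ m ∈ ({2, 3, 5, 11, 17, 41} : Set ℤ), 4 * m - 1 = a := by
    rcases ha with rfl | rfl | rfl | rfl | rfl | rfl
    exacts [⟨2, by simp⟩, ⟨3, by simp⟩, ⟨5, by simp⟩, ⟨11, by simp⟩, ⟨17, by simp⟩, ⟨41, by simp⟩]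
  have hm2 : 2 ≤ m := by rcases hm with rfl | rfl | rfl | rfl | rfl | rfl <;> decide
  have hsq : Squarefree (4 * m - 1) := by
    rcases hm with rfl | rfl | rfl | rfl | rfl | rfl <;> norm_num
  have := QuadraticOrder.isPrincipalIdealRing_of_mem hm
  have hxy : IsCoprime x (y ^ n) := (Int.isCoprime_iff_gcd_eq_one.mpr hgcd).pow_right
  obtain ⟨u, v, hu, hv, huv, hx, hy, hz⟩ :=
    exists_odd_isCoprime_of_sq_add_mul_sq_eq_four_mul_cube hm2 hsq hxy (by rw [← heq]; ring)
  exact ⟨u, v, hu, hv, Int.isCoprime_iff_gcd_eq_one.mp huv,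
    fun h0 ↦ Int.not_odd_zero (h0 ▸ hu.mul hv), hx, hy, hz⟩
end

section
/- There are no integers x, y, z with gcd(x,y) = 1 satisfying 7x^2 + y^{10} = 4z^3. -/
/-!
The ring of integers `ℤ[(1 + √-7)/2]` is norm-Euclidean with units `±1`. In it, for a primitive
solution, `(y⁵ + x√-7)/2` is coprime to its conjugate and has norm `z³`, so it is a cube. Comparing
traces gives `y⁵ = a q` with `a² - 21 b² = 4 q`. Up to powers of `3` the factors `a` and `q` are
coprime, hence fifth powers, and according to whether `3 ∣ a` or not one obtains
`3⁷ s¹⁰ - 7 b² = 4 t⁵` or `s¹⁰ - 21 b² = 4 t⁵`.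

Reciprocity rules out both equations. For the second, `k = (s² - t)/3` is positive and divides
`(s⁵)² + 7 b²`, so `(k/7) = (-7/k) = 1`, while the equation modulo `7` gives `(k/7) = -1`. For the
first, `n = t - 3 s²` divides `4 (t⁵ - (3 s²)⁵) = 1215 s¹⁰ - 7 b²`, which becomes
`105 (9 s⁵)² - (7 b)²` on multiplication by `7`. Hence `(|n|/105) = 1`, while the equation modulo
`3`, `5` and `7` gives `(n/105) = -1`; the sign of `n` does not matter because `(-1/105) = 1`.
-/

theorem exists_abs_sub_two_mul_mul_le {n : ℤ} (hn : 0 < n) (c : ℤ) :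
    ∃ q : ℤ, |c - 2 * n * q| ≤ n := by
  have hlower := Int.mul_ediv_self_le (x := c + n) (k := 2 * n) (by positivity)
  have hupper := Int.lt_mul_ediv_self_add (x := c + n) (k := 2 * n) (by positivity)
  exact ⟨(c + n) / (2 * n), abs_le.2 ⟨by linarith, by linarith⟩⟩

theorem exists_pow_eq_of_mul_eq_pow_of_odd {R : Type*} [CommRing R] [IsDomain R] [IsBezout R]
    (hunit : ∀ u : R, IsUnit u → u = 1 ∨ u = -1) {x y z : R} (hxy : IsCoprime x y) {k : ℕ}
    (hk : Odd k) (h : x * y = z ^ k) : ∃ w, w ^ k = x := by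
  obtain ⟨w, u, hu⟩ := exists_associated_pow_of_mul_eq_pow' hxy h
  rcases hunit u u.isUnit with hu' | hu'
  · exact ⟨w, by rw [← hu, hu', mul_one]⟩
  · exact ⟨-w, by rw [hk.neg_pow, ← hu, hu', mul_neg_one]⟩

namespace ImaginaryQuadraticOrder

open QuadraticAlgebra

variable {a b : ℤ}

theorem four_mul_norm (x : QuadraticAlgebra ℤ a b) :
    4 * x.norm = (2 * x.re + b * x.im) ^ 2 - (b ^ 2 + 4 * a) * x.im ^ 2 := by
  rw [norm_def]
  ring

theorem norm_nonneg (hneg : b ^ 2 + 4 * a < 0) (x : QuadraticAlgebra ℤ a b) : 0 ≤ x.norm := by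
  nlinarith [four_mul_norm x, sq_nonneg (2 * x.re + b * x.im), sq_nonneg x.im]

theorem norm_eq_zero_iff (hneg : b ^ 2 + 4 * a < 0) {x : QuadraticAlgebra ℤ a b} :
    x.norm = 0 ↔ x = 0 := by
  refine ⟨fun hx => ?_, fun hx => by rw [hx, QuadraticAlgebra.norm_zero]⟩
  have hsum := four_mul_norm x
  have him : x.im = 0 := by
    by_contra him
    nlinarith [sq_nonneg (2 * x.re + b * x.im), sq_pos_of_ne_zero him]
  have hre : x.re = 0 := by
    simpa [hx, him] using hsum.symm
  exact QuadraticAlgebra.ext hre him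

theorem norm_pos (hneg : b ^ 2 + 4 * a < 0) {x : QuadraticAlgebra ℤ a b} (hx : x ≠ 0) :
    0 < x.norm :=
  (norm_nonneg hneg x).lt_of_ne' ((norm_eq_zero_iff hneg).not.2 hx)

theorem eq_one_or_eq_neg_one_of_isUnit (hneg : b ^ 2 + 4 * a < -4) {x : QuadraticAlgebra ℤ a b}
    (hx : IsUnit x) : x = 1 ∨ x = -1 := by
  have hnorm : x.norm = 1 := by
    have := norm_nonneg (by lia) x
    rcases Int.isUnit_iff.1 (isUnit_iff_norm_isUnit.1 hx) with h | h <;> lia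
  have hsum := four_mul_norm x
  have him : x.im = 0 := by
    by_contra him
    nlinarith [sq_nonneg (2 * x.re + b * x.im), sq_pos_of_ne_zero him]
  have hre : x.re ^ 2 = 1 := by
    rw [hnorm, him] at hsum
    linarith
  rcases sq_eq_one_iff.1 hre with h | h
  · exact Or.inl (QuadraticAlgebra.ext h him)
  · exact Or.inr (QuadraticAlgebra.ext h (by simpa using him))

theorem exists_norm_sub_mul_lt (hneg : b ^ 2 + 4 * a < 0) (hbound : -12 < b ^ 2 + 4 * a)
    (x : QuadraticAlgebra ℤ a b) {y : QuadraticAlgebra ℤ a b} (hy : y ≠ 0) :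
    ∃ q, (x - y * q).norm < y.norm := by
  have hpos := norm_pos hneg hy
  let w := x * star y
  obtain ⟨v, hv⟩ := exists_abs_sub_two_mul_mul_le hpos (2 * w.im)
  obtain ⟨u, hu⟩ := exists_abs_sub_two_mul_mul_le hpos (2 * w.re + b * (w.im - y.norm * v))
  let q : QuadraticAlgebra ℤ a b := ⟨u, v⟩
  let r := w - (y.norm : QuadraticAlgebra ℤ a b) * q
  have hr : (x - y * q) * star y = r := by
    have hy_star : (y.norm : QuadraticAlgebra ℤ a b) = y * star y := algebraMap_norm_eq_mul_star y
    simp only [r, w, hy_star]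
    ring
  have hr_norm : (x - y * q).norm * y.norm = r.norm := by
    rw [← hr, map_mul, QuadraticAlgebra.norm_star]
  have hre : r.re = w.re - y.norm * u := by simp [r, q]
  have him : r.im = w.im - y.norm * v := by simp [r, q]
  have hre_sq : (2 * r.re + b * r.im) ^ 2 ≤ y.norm ^ 2 := by
    rw [hre, him]
    exact sq_le_sq' (by linarith [abs_le.1 hu]) (by linarith [abs_le.1 hu])
  have him_sq : (2 * r.im) ^ 2 ≤ y.norm ^ 2 := by
    rw [him]
    exact sq_le_sq' (by linarith [abs_le.1 hv]) (by linarith [abs_le.1 hv])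
  have hlt : (x - y * q).norm * y.norm < y.norm * y.norm := by
    nlinarith [four_mul_norm r, sq_nonneg r.im]
  exact ⟨q, lt_of_mul_lt_mul_right hlt hpos.le⟩

/-- The norm-Euclidean structure on an imaginary quadratic order of discriminant `b ^ 2 + 4 * a`
greater than `-12`, which makes such an order a Bézout domain. The quotient is an arbitrary choice
of `q` for which `x - y * q` has norm less than that of `y`, and is `0` when `y = 0`. -/
noncomputable abbrev euclideanDomain (hneg : b ^ 2 + 4 * a < 0) (hbound : -12 < b ^ 2 + 4 * a) :
    EuclideanDomain (QuadraticAlgebra ℤ a b) :=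
  have hdiv (x y : QuadraticAlgebra ℤ a b) : ∃ q, y ≠ 0 → (x - y * q).norm < y.norm := by
    by_cases hy : y = 0
    · exact ⟨0, fun h => (h hy).elim⟩
    · exact (exists_norm_sub_mul_lt hneg hbound x hy).imp fun _ hq _ => hq
  open Classical in
  { quotient x y := if y = 0 then 0 else (hdiv x y).choose
    quotient_zero x := if_pos rfl
    remainder x y := x - y * if y = 0 then 0 else (hdiv x y).choose
    quotient_mul_add_remainder_eq x y := add_sub_cancel _ _
    r x y := x.norm.natAbs < y.norm.natAbs
    r_wellFounded := (measure fun x : QuadraticAlgebra ℤ a b => x.norm.natAbs).wf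
    remainder_lt x y hy := by
      rw [if_neg hy]
      exact Int.natAbs_lt_natAbs_of_nonneg_of_lt (norm_nonneg hneg _) ((hdiv x y).choose_spec hy)
    mul_left_not_lt x y hy := by
      rw [map_mul, Int.natAbs_mul, not_lt]
      exact Nat.le_mul_of_pos_right _ (Int.natAbs_pos.2 (norm_pos hneg hy).ne') }

theorem isCoprime_star {x : QuadraticAlgebra ℤ a b} (h : IsCoprime x.trace x.norm) :
    IsCoprime x (star x) := by
  have hmap := h.map (algebraMap ℤ (QuadraticAlgebra ℤ a b))
  rw [algebraMap_trace_eq_add_star, algebraMap_norm_eq_mul_star] at hmap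
  have hx : IsCoprime x (x + star x) := hmap.of_mul_right_left.symm
  simpa using hx.add_mul_left_right (-1)

theorem exists_pow_eq_of_norm_eq_pow (hneg : b ^ 2 + 4 * a < -4) (hbound : -12 < b ^ 2 + 4 * a)
    {x : QuadraticAlgebra ℤ a b} {z : ℤ} {k : ℕ} (hk : Odd k) (hcop : IsCoprime x.trace z)
    (hnorm : x.norm = z ^ k) : ∃ y, y ^ k = x := by
  let := euclideanDomain (by lia) hbound
  have hmul : x * star x = (algebraMap ℤ (QuadraticAlgebra ℤ a b) z) ^ k := by
    rw [← algebraMap_norm_eq_mul_star, hnorm, map_pow]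
  exact exists_pow_eq_of_mul_eq_pow_of_odd (fun _ => eq_one_or_eq_neg_one_of_isUnit hneg)
    (isCoprime_star (hnorm ▸ hcop.pow_right)) hk hmul

end ImaginaryQuadraticOrder

section

open scoped NumberTheorySymbols

theorem jacobiSym_eq_of_modEq_mul_sq {a c s : ℤ} {m : ℕ} (h : a ≡ c * s ^ 2 [ZMOD m])
    (hs : IsCoprime s m) : J(a | m) = J(c | m) := by
  rw [jacobiSym.mod_left' h, jacobiSym.mul_left,
    jacobiSym.sq_one' (Int.isCoprime_iff_gcd_eq_one.1 hs), mul_one]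

theorem jacobiSym_eq_one_of_dvd_sq_sub_mul_sq {D u v : ℤ} {n : ℕ} (hu : IsCoprime u n)
    (h : (n : ℤ) ∣ u ^ 2 - D * v ^ 2) : J(D | n) = 1 := by
  have hprod : J(D | n) * J(v | n) ^ 2 = 1 := by
    rw [← jacobiSym.pow_left, ← jacobiSym.mul_left, ← jacobiSym.one_left n]
    exact jacobiSym_eq_of_modEq_mul_sq (by simpa using Int.modEq_iff_dvd.2 h) hu
  rcases jacobiSym.trichotomy v n with hv | hv | hv <;> simp_all

theorem jacobiSym_natAbs_of_emod_four_eq_one {D : ℤ} (hD : D % 4 = 1) {n : ℕ} (hn : Odd n) :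
    J(n | D.natAbs) = J(D | n) := by
  rcases Int.natAbs_eq D with hD' | hD'
  · conv_rhs => rw [hD']
    exact jacobiSym.quadratic_reciprocity_one_mod_four' hn (by lia)
  · conv_rhs => rw [hD', jacobiSym.neg _ hn]
    rcases Nat.odd_mod_four_iff.1 (Nat.odd_iff.1 hn) with hn4 | hn4
    · rw [ZMod.χ₄_nat_one_mod_four hn4, one_mul,
        jacobiSym.quadratic_reciprocity_one_mod_four hn4 (by rw [Nat.odd_iff]; lia)]
    · rw [ZMod.χ₄_nat_three_mod_four hn4, neg_one_mul,
        jacobiSym.quadratic_reciprocity_three_mod_four hn4 (by lia)]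

theorem jacobiSym_two_natAbs_of_emod_eight_eq_one {D : ℤ} (hD : D % 8 = 1) :
    J(2 | D.natAbs) = 1 := by
  rw [jacobiSym.at_two (by rw [Nat.odd_iff]; lia), ZMod.χ₈_nat_eq_if_mod_eight, if_neg (by lia),
    if_pos (by lia)]

theorem jacobiSym_natAbs_eq_one_of_dvd_sq_sub_mul_sq {D u v : ℤ} (hD : D % 8 = 1) {n : ℕ}
    (hn : n ≠ 0) (hu : IsCoprime u n) (h : (n : ℤ) ∣ u ^ 2 - D * v ^ 2) :
    J(n | D.natAbs) = 1 := by
  obtain ⟨k, m, hm, rfl⟩ := Nat.exists_eq_two_pow_mul_odd hn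
  push_cast at hu h ⊢
  rw [jacobiSym.mul_left, jacobiSym.pow_left, jacobiSym_two_natAbs_of_emod_eight_eq_one hD,
    one_pow, one_mul, jacobiSym_natAbs_of_emod_four_eq_one (by lia) hm]
  exact jacobiSym_eq_one_of_dvd_sq_sub_mul_sq hu.of_mul_right_right (dvd_of_mul_left_dvd h)

theorem modEq_sq_of_pow_ten_sub_eq {s t b : ℤ} (h : s ^ 10 - 21 * b ^ 2 = 4 * t ^ 5) :
    t ≡ s ^ 2 [ZMOD 3] := by
  have key : ∀ s t b : ZMod 3, s ^ 10 - 21 * b ^ 2 = 4 * t ^ 5 → t = s ^ 2 := by decide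
  exact (ZMod.intCast_eq_intCast_iff _ _ 3).1 (mod_cast key s t b (mod_cast congrArg Int.cast h))

theorem modEq_four_mul_sq_of_pow_ten_sub_eq {s t b : ℤ} (h : s ^ 10 - 21 * b ^ 2 = 4 * t ^ 5) :
    t ≡ 4 * s ^ 2 [ZMOD 7] := by
  have key : ∀ s t b : ZMod 7, s ^ 10 - 21 * b ^ 2 = 4 * t ^ 5 → t = 4 * s ^ 2 := by decide
  exact (ZMod.intCast_eq_intCast_iff _ _ 7).1 (mod_cast key s t b (mod_cast congrArg Int.cast h))

theorem jacobiSym_seven_of_three_mul_eq {s t b k : ℤ} (hs : IsCoprime s 7)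
    (hk : 3 * k = s ^ 2 - t) (h : s ^ 10 - 21 * b ^ 2 = 4 * t ^ 5) : J(k | 7) = -1 := by
  have hmod : k ≡ -1 * s ^ 2 [ZMOD 7] := by
    have := modEq_four_mul_sq_of_pow_ten_sub_eq h
    rw [Int.modEq_iff_dvd] at this ⊢
    lia
  rw [jacobiSym_eq_of_modEq_mul_sq hmod hs]
  norm_num

theorem dvd_pow_ten_add_of_three_mul_eq {s t b k : ℤ} (hk : 3 * k = s ^ 2 - t)
    (h : s ^ 10 - 21 * b ^ 2 = 4 * t ^ 5) : k ∣ s ^ 10 + 7 * b ^ 2 := by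
  have hdvd : 3 * k ∣ 3 * (s ^ 10 + 7 * b ^ 2) := by
    rw [hk, show 3 * (s ^ 10 + 7 * b ^ 2) = 4 * ((s ^ 2) ^ 5 - t ^ 5) by linarith]
    exact (sub_dvd_pow_sub_pow _ _ 5).mul_left 4
  exact (mul_dvd_mul_iff_left three_ne_zero).1 hdvd

theorem pow_ten_sub_twentyone_mul_sq_ne {s t b : ℤ} (hs : IsCoprime s (7 * b)) :
    s ^ 10 - 21 * b ^ 2 ≠ 4 * t ^ 5 := by
  intro h
  obtain ⟨k, hk⟩ : 3 ∣ s ^ 2 - t := (modEq_sq_of_pow_ten_sub_eq h).dvd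
  have hk_pos : 0 < k := by
    have hs_pos : 0 < s ^ 10 := by
      have : s ≠ 0 := by
        rintro rfl
        exact absurd (isCoprime_zero_left.1 hs.of_mul_right_left) (by decide)
      positivity
    have hpow : t ^ 5 < (s ^ 2) ^ 5 := by
      linarith [sq_nonneg b, pow_mul s 2 5]
    have := (Odd.pow_lt_pow (by decide)).1 hpow
    linarith
  lift k to ℕ using hk_pos.le
  have hk_dvd : (k : ℤ) ∣ s ^ 10 + 7 * b ^ 2 := dvd_pow_ten_add_of_three_mul_eq hk.symm h
  have hcop : IsCoprime (s ^ 5) k := by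
    have hsum : IsCoprime s (s ^ 10 + 7 * b ^ 2) := by
      rw [show s ^ 10 + 7 * b ^ 2 = 7 * b * b + s * s ^ 9 by ring]
      exact (hs.mul_right hs.of_mul_right_right).add_mul_left_right (s ^ 9)
    exact (hsum.of_isCoprime_of_dvd_right hk_dvd).pow_left
  have hJ_one : J(k | 7) = 1 := by
    rw [show s ^ 10 + 7 * b ^ 2 = (s ^ 5) ^ 2 - -7 * b ^ 2 by ring] at hk_dvd
    exact jacobiSym_natAbs_eq_one_of_dvd_sq_sub_mul_sq (D := -7) rfl (by lia) hcop hk_dvd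
  have hJ_neg := jacobiSym_seven_of_three_mul_eq hs.of_mul_right_left hk.symm h
  norm_num [hJ_one] at hJ_neg

theorem sub_three_mul_sq_modEq_three {s t b : ℤ} (h : 3 ^ 7 * s ^ 10 - 7 * b ^ 2 = 4 * t ^ 5) :
    t - 3 * s ^ 2 ≡ -1 * b ^ 2 [ZMOD 3] := by
  have key : ∀ s t b : ZMod 3, 3 ^ 7 * s ^ 10 - 7 * b ^ 2 = 4 * t ^ 5 →
      t - 3 * s ^ 2 = -1 * b ^ 2 := by decide
  exact (ZMod.intCast_eq_intCast_iff _ _ 3).1 (mod_cast key s t b (mod_cast congrArg Int.cast h))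

theorem sub_three_mul_sq_modEq_five {s t b : ℤ} (h : 3 ^ 7 * s ^ 10 - 7 * b ^ 2 = 4 * t ^ 5) :
    t - 3 * s ^ 2 ≡ 2 * b ^ 2 [ZMOD 5] := by
  have key : ∀ s t b : ZMod 5, 3 ^ 7 * s ^ 10 - 7 * b ^ 2 = 4 * t ^ 5 →
      t - 3 * s ^ 2 = 2 * b ^ 2 := by decide
  exact (ZMod.intCast_eq_intCast_iff _ _ 5).1 (mod_cast key s t b (mod_cast congrArg Int.cast h))

theorem sub_three_mul_sq_modEq_seven {s t b : ℤ} (h : 3 ^ 7 * s ^ 10 - 7 * b ^ 2 = 4 * t ^ 5) :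
    t - 3 * s ^ 2 ≡ 3 * s ^ 2 [ZMOD 7] := by
  have key : ∀ s t b : ZMod 7, 3 ^ 7 * s ^ 10 - 7 * b ^ 2 = 4 * t ^ 5 →
      t - 3 * s ^ 2 = 3 * s ^ 2 := by decide
  exact (ZMod.intCast_eq_intCast_iff _ _ 7).1 (mod_cast key s t b (mod_cast congrArg Int.cast h))

theorem isCoprime_five_of_three_pow_seven_mul_pow_ten_sub_eq {s t b : ℤ} (hs : IsCoprime s b)
    (h : 3 ^ 7 * s ^ 10 - 7 * b ^ 2 = 4 * t ^ 5) : IsCoprime b 5 := by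
  have h5 : Prime (5 : ℤ) := by norm_num
  refine ((h5.coprime_iff_not_dvd).2 fun hb => ?_).symm
  have hn : 5 ∣ t - 3 * s ^ 2 :=
    (sub_three_mul_sq_modEq_five h).dvd_iff.2 ((dvd_pow hb two_ne_zero).mul_left 2)
  have hpow : 5 ^ 2 ∣ t ^ 5 - (3 * s ^ 2) ^ 5 := by
    simpa using dvd_sub_pow_of_dvd_sub (p := 5) hn 1
  have hmul : (5 : ℤ) * 5 ∣ 5 * (243 * s ^ 10) := by
    rw [← sq, show 5 * (243 * s ^ 10) = 4 * (t ^ 5 - (3 * s ^ 2) ^ 5) + 7 * b ^ 2 by linarith]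
    exact (hpow.mul_left 4).add ((pow_dvd_pow_of_dvd hb 2).mul_left 7)
  have hs5 : 5 ∣ 243 * s ^ 10 := (mul_dvd_mul_iff_left (by norm_num)).1 hmul
  have hs5' : 5 ∣ s := h5.dvd_of_dvd_pow ((h5.dvd_or_dvd hs5).resolve_left (by norm_num))
  exact h5.not_isUnit (hs.isUnit_of_dvd' hs5' hb)

theorem jacobiSym_sub_three_mul_sq {s t b : ℤ} (hs : IsCoprime s (7 * b)) (hb : IsCoprime b 3)
    (h : 3 ^ 7 * s ^ 10 - 7 * b ^ 2 = 4 * t ^ 5) : J(t - 3 * s ^ 2 | 105) = -1 := by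
  have h3 : J(t - 3 * s ^ 2 | 3) = J(-1 | 3) :=
    jacobiSym_eq_of_modEq_mul_sq (sub_three_mul_sq_modEq_three h) hb
  have h5 : J(t - 3 * s ^ 2 | 5) = J(2 | 5) :=
    jacobiSym_eq_of_modEq_mul_sq (sub_three_mul_sq_modEq_five h)
      (isCoprime_five_of_three_pow_seven_mul_pow_ten_sub_eq hs.of_mul_right_right h)
  have h7 : J(t - 3 * s ^ 2 | 7) = J(3 | 7) :=
    jacobiSym_eq_of_modEq_mul_sq (sub_three_mul_sq_modEq_seven h) hs.of_mul_right_left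
  rw [show 105 = 3 * (5 * 7) by norm_num, jacobiSym.mul_right, jacobiSym.mul_right, h3, h5, h7]
  norm_num

theorem three_pow_seven_mul_pow_ten_sub_ne {s t b : ℤ} (hs : IsCoprime s (7 * b))
    (hb : IsCoprime b 3) : 3 ^ 7 * s ^ 10 - 7 * b ^ 2 ≠ 4 * t ^ 5 := by
  intro h
  have hJ := jacobiSym_sub_three_mul_sq hs hb h
  set n := t - 3 * s ^ 2 with hn
  have hn_dvd : n ∣ 1215 * s ^ 10 - 7 * b ^ 2 := by
    rw [show 1215 * s ^ 10 - 7 * b ^ 2 = 4 * (t ^ 5 - (3 * s ^ 2) ^ 5) by linarith]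
    exact (sub_dvd_pow_sub_pow _ _ 5).mul_left 4
  have hcop : IsCoprime (7 * b) n := by
    have hb5 : IsCoprime b 5 :=
      isCoprime_five_of_three_pow_seven_mul_pow_ten_sub_eq hs.of_mul_right_right h
    have hb15 : IsCoprime (7 * b) (3 ^ 5 * 5) :=
      .mul_left (by norm_num) (hb.pow_right.mul_right hb5)
    refine IsCoprime.of_isCoprime_of_dvd_right ?_ hn_dvd
    rw [show 1215 * s ^ 10 - 7 * b ^ 2 = 3 ^ 5 * 5 * s ^ 10 + 7 * b * -b by ring]
    exact (hb15.mul_right hs.symm.pow_right).add_mul_left_right (-b)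
  have hn0 : n ≠ 0 := by
    intro h0
    norm_num [h0] at hJ
  have hJ_one : J(n.natAbs | 105) = 1 :=
    jacobiSym_natAbs_eq_one_of_dvd_sq_sub_mul_sq (D := 105) (u := 7 * b) (v := 9 * s ^ 5)
      (by decide) (Int.natAbs_ne_zero.2 hn0) (by rwa [Int.natCast_natAbs, IsCoprime.abs_right_iff])
      (by
        rw [Int.natAbs_dvd, show (7 * b) ^ 2 - 105 * (9 * s ^ 5) ^ 2 =
          -7 * (1215 * s ^ 10 - 7 * b ^ 2) by ring]
        exact hn_dvd.mul_left (-7))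
  rcases Int.natAbs_eq n with hsign | hsign
  · rw [hsign, hJ_one] at hJ
    norm_num at hJ
  · rw [hsign, jacobiSym.neg _ (by decide), hJ_one] at hJ
    revert hJ
    decide

end

section

variable {p m x y z : ℤ} {n : ℕ}

theorem isCoprime_of_prime_mul_sq_add_sq_eq (hp : Prime p) (hpm : ¬p ∣ m) (hn : 2 ≤ n)
    (hxy : IsCoprime x y) (h : p * x ^ 2 + y ^ 2 = m * z ^ n) : IsCoprime p y := by
  refine hp.coprime_iff_not_dvd.2 fun hy => ?_
  have hz : p ∣ z := by
    have hmul : p ∣ m * z ^ n := h ▸ (dvd_mul_right _ _).add (dvd_pow hy two_ne_zero)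
    exact hp.dvd_of_dvd_pow ((hp.dvd_or_dvd hmul).resolve_left hpm)
  have hx : p ∣ x := by
    have hzn : p ^ 2 ∣ z ^ n := (pow_dvd_pow p hn).trans (pow_dvd_pow_of_dvd hz n)
    have hmul : p * p ∣ p * x ^ 2 := by
      rw [← sq, eq_sub_of_add_eq h]
      exact (hzn.mul_left m).sub (pow_dvd_pow_of_dvd hy 2)
    exact hp.dvd_of_dvd_pow ((mul_dvd_mul_iff_left hp.ne_zero).1 hmul)
  exact hp.not_isUnit (hxy.isUnit_of_dvd' hx hy)

theorem isCoprime_of_mul_sq_add_sq_eq (hn : n ≠ 0) (hpy : IsCoprime p y) (hxy : IsCoprime x y)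
    (h : p * x ^ 2 + y ^ 2 = m * z ^ n) : IsCoprime y z := by
  have hy : IsCoprime y (p * x ^ 2) := hpy.symm.mul_right hxy.symm.pow_right
  have hmul : IsCoprime y (m * z ^ n) := by
    rw [← h, sq y]
    exact hy.add_mul_left_right y
  exact hmul.of_isCoprime_of_dvd_right ((dvd_pow_self z hn).mul_left m)

end

theorem exists_eq_mul_of_seven_mul_sq_add_sq_eq {x y z : ℤ} (hyz : IsCoprime y z)
    (h : 7 * x ^ 2 + y ^ 2 = 4 * z ^ 3) :
    ∃ a b q : ℤ, a ^ 2 - 21 * b ^ 2 = 4 * q ∧ y = a * q ∧ x = b * (3 * q + 14 * b ^ 2) := by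
  obtain ⟨u, rfl⟩ : ∃ u, y = 2 * u + x := by
    have hpar : Even (7 * x ^ 2 + y ^ 2) := h ▸ (by decide : Even (4 : ℤ)).mul_right _
    have : Even (y - x) := by
      simp only [Int.even_add, Int.even_sub, Int.even_mul, Int.even_pow] at hpar ⊢
      grind
    obtain ⟨u, hu⟩ := this
    exact ⟨u, by linarith⟩
  let α : QuadraticAlgebra ℤ (-2) 1 := ⟨u, x⟩
  have htrace : α.trace = 2 * u + x := by simp [QuadraticAlgebra.trace_def, α]
  have hnorm : α.norm = z ^ 3 := by
    simp only [QuadraticAlgebra.norm_def, α]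
    linarith
  obtain ⟨β, hβ⟩ := ImaginaryQuadraticOrder.exists_pow_eq_of_norm_eq_pow (by norm_num)
    (by norm_num) (by decide) (htrace ▸ hyz) hnorm
  obtain ⟨hre, him⟩ := QuadraticAlgebra.ext_iff.1 hβ
  simp only [pow_three, QuadraticAlgebra.re_mul, QuadraticAlgebra.im_mul, α] at hre him
  refine ⟨2 * β.re + β.im, β.im, β.re ^ 2 + β.re * β.im - 5 * β.im ^ 2, by ring, ?_, ?_⟩
  · rw [← hre, ← him]
    ring
  · rw [← him]
    ring

theorem isCoprime_of_mul_sub_mul_sq_eq {a b c d m q : ℤ} (ha : IsCoprime a (d * b))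
    (h : a * c - d * b ^ 2 = m * q) : IsCoprime a q := by
  have hdb : IsCoprime a (d * b * b) := ha.mul_right ha.of_mul_right_right
  have hmul : IsCoprime a (m * q) := by
    rw [← h, show a * c - d * b ^ 2 = -(d * b * b) + a * c by ring]
    exact hdb.neg_right.add_mul_left_right c
  exact hmul.of_mul_right_right

theorem exists_pow_ten_sub {a b q y : ℤ} (ha : IsCoprime a (7 * b)) (ha3 : IsCoprime a 3)
    (hq : a ^ 2 - 21 * b ^ 2 = 4 * q) (hy : a * q = y ^ 5) :
    ∃ s t : ℤ, IsCoprime s (7 * b) ∧ s ^ 10 - 21 * b ^ 2 = 4 * t ^ 5 := by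
  have ha21 : IsCoprime a (21 * b) := by
    rw [show 21 * b = 3 * (7 * b) by ring]
    exact ha3.mul_right ha
  have haq : IsCoprime a q := isCoprime_of_mul_sub_mul_sq_eq ha21 (by rwa [← sq])
  obtain ⟨⟨s, rfl⟩, t, rfl⟩ := Int.eq_pow_of_mul_eq_pow_odd haq (by decide) hy
  exact ⟨s, t, (IsCoprime.pow_left_iff (by norm_num)).1 ha, by rw [← hq]; ring⟩

theorem exists_three_pow_seven_mul_pow_ten_sub {c b q y : ℤ} (hc : IsCoprime c (7 * b))
    (hb : IsCoprime b 3) (hq : (3 * c) ^ 2 - 21 * b ^ 2 = 4 * q) (hy : 3 * c * q = y ^ 5) :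
    ∃ s t : ℤ, IsCoprime s (7 * b) ∧ 3 ^ 7 * s ^ 10 - 7 * b ^ 2 = 4 * t ^ 5 := by
  obtain ⟨r, rfl⟩ : 3 ∣ q := by lia
  replace hq : 3 * c ^ 2 - 7 * b ^ 2 = 4 * r := by linarith
  have hr : IsCoprime 3 r :=
    isCoprime_of_mul_sub_mul_sq_eq ((by norm_num : IsCoprime (3 : ℤ) 7).mul_right hb.symm) hq
  obtain ⟨w, rfl⟩ : 3 ∣ y := Int.prime_three.dvd_of_dvd_pow (n := 5) ⟨3 * c * r, by linarith⟩
  have hcr : c * r = 3 ^ 3 * w ^ 5 := by linarith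
  obtain ⟨e, rfl⟩ : 3 ^ 3 ∣ c := hr.pow_left.dvd_of_dvd_mul_right ⟨_, hcr⟩
  have he : IsCoprime e (7 * b) := hc.of_mul_left_right
  have her : IsCoprime e r :=
    isCoprime_of_mul_sub_mul_sq_eq (c := 3 ^ 7 * e) he (by rw [← hq]; ring)
  obtain ⟨⟨s, rfl⟩, t, rfl⟩ :=
    Int.eq_pow_of_mul_eq_pow_odd her (by decide : Odd 5) (c := w) (by linarith)
  exact ⟨s, t, (IsCoprime.pow_left_iff (by norm_num)).1 he, by rw [← hq]; ring⟩

theorem no_primitive_solutions_7x2_y10_4z3 :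
    ¬ ∃ x y z : ℤ, Int.gcd x y = 1 ∧ 7 * x ^ 2 + y ^ 10 = 4 * z ^ 3 := by
  rintro ⟨x, y, z, hgcd, h⟩
  replace h : 7 * x ^ 2 + (y ^ 5) ^ 2 = 4 * z ^ 3 := by rw [← h]; ring
  have hxy : IsCoprime x (y ^ 5) := (Int.isCoprime_iff_gcd_eq_one.2 hgcd).pow_right
  have h7y : IsCoprime 7 (y ^ 5) :=
    isCoprime_of_prime_mul_sq_add_sq_eq (by norm_num) (by norm_num) (by norm_num) hxy h
  have hyz : IsCoprime (y ^ 5) z := isCoprime_of_mul_sq_add_sq_eq three_ne_zero h7y hxy h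
  obtain ⟨a, b, q, hq, hy, hx⟩ := exists_eq_mul_of_seven_mul_sq_add_sq_eq hyz h
  have hab : IsCoprime a b := hxy.symm.mono ⟨q, hy⟩ ⟨_, hx⟩
  have ha7b : IsCoprime a (7 * b) := .mul_right (h7y.symm.mono ⟨q, hy⟩ dvd_rfl) hab
  by_cases ha3 : 3 ∣ a
  · obtain ⟨c, rfl⟩ := ha3
    obtain ⟨s, t, hs, hst⟩ := exists_three_pow_seven_mul_pow_ten_sub ha7b.of_mul_left_right
      hab.of_mul_left_left.symm hq hy.symm
    exact three_pow_seven_mul_pow_ten_sub_ne hs hab.of_mul_left_left.symm hst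
  · obtain ⟨s, t, hs, hst⟩ := exists_pow_ten_sub ha7b
      (Int.prime_three.coprime_iff_not_dvd.2 ha3).symm hq hy.symm
    exact pow_ten_sub_twentyone_mul_sq_ne hs hst
end
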